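/- arXiv:2109.02756 — 2 statements merged into one kernel-verified Lean document; each statement's English description precedes it below -/
import Mathlib

section
/- Let D ⊆ ℝⁿ be a nonempty closed convex set and let {y^j} be a sequence in ℝⁿ such that lim_{j→∞} y^j / j = ȳ for some ȳ ∈ ℝⁿ. Then lim_{j→∞} (y^j − π_D[y^j]) / j = π_{(rec D)°}[ȳ], the projection of ȳ onto the polar cone of the recession cone of D. -/
open scoped RealInnerProductSpace
open Filter Topology Metric ContinuousLinearMap

/-- Projection onto a set: the unique nearest point, when it exists
(it exists and is unique for nonempty closed convex sets in Euclidean space). -/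
noncomputable def proj {E : Type*} [NormedAddCommGroup E] [InnerProductSpace ℝ E]
    (S : Set E) (x : E) : E :=
  open Classical in
  if h : ∃ y, y ∈ S ∧ ∀ z ∈ S, ‖x - y‖ ≤ ‖x - z‖ then h.choose else 0

/-- The polar cone `K° = {w | ⟪w, y⟫ ≤ 0 for all y ∈ K}`. -/
def polarCone {E : Type*} [NormedAddCommGroup E] [InnerProductSpace ℝ E]
    (K : Set E) : Set E := {w | ∀ y ∈ K, ⟪w, y⟫ ≤ 0}

/-- The recession cone `rec D = {y | y + z ∈ D for all z ∈ D}`. -/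
def recCone {E : Type*} [NormedAddCommGroup E] (D : Set E) : Set E :=
  {y | ∀ z ∈ D, y + z ∈ D}

/-- The normal cone of `D` at `z`: `N_D(z) = {y | ⟪y, z' - z⟫ ≤ 0 for all z' ∈ D}`. -/
def normalCone {E : Type*} [NormedAddCommGroup E] [InnerProductSpace ℝ E]
    (D : Set E) (z : E) : Set E := {y | ∀ z' ∈ D, ⟪y, z' - z⟫ ≤ 0}

lemma proj_eq_of_inner {E : Type*} [NormedAddCommGroup E] [InnerProductSpace ℝ E]
    {S : Set E} {x w : E} (hw : w ∈ S) (h : ∀ v ∈ S, ⟪x - w, v - w⟫ ≤ 0) : proj S x = w := by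
  have key : ∀ v ∈ S, ‖x - w‖ ^ 2 + ‖v - w‖ ^ 2 ≤ ‖x - v‖ ^ 2 := by
    intro v hv
    have e : x - v = (x - w) - (v - w) := by abel
    rw [e, norm_sub_sq_real (x - w) (v - w)]
    linarith [h v hv]
  have hex : ∃ y, y ∈ S ∧ ∀ z ∈ S, ‖x - y‖ ≤ ‖x - z‖ := by
    refine ⟨w, hw, fun z hz => ?_⟩
    refine (sq_le_sq₀ (norm_nonneg _) (norm_nonneg _)).1 ?_
    linarith [key z hz, sq_nonneg ‖z - w‖]
  unfold _root_.proj
  rw [dif_pos hex]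
  have h1 := hex.choose_spec
  have h2 := key _ h1.1
  have h3 := (sq_le_sq₀ (norm_nonneg _) (norm_nonneg _)).2 (h1.2 w hw)
  have h4 : ‖hex.choose - w‖ ^ 2 = 0 := le_antisymm (by linarith) (sq_nonneg _)
  exact sub_eq_zero.1 (norm_eq_zero.1 (pow_eq_zero_iff (two_ne_zero)|>.1 h4))

lemma proj_spec_inner {E : Type*} [NormedAddCommGroup E] [InnerProductSpace ℝ E] [CompleteSpace E]
    {S : Set E} (hne : S.Nonempty) (hcl : IsClosed S) (hc : Convex ℝ S) (x : E) :
    proj S x ∈ S ∧ ∀ v ∈ S, ⟪x - proj S x, v - proj S x⟫ ≤ 0 := by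
  obtain ⟨w, hw, hmin⟩ := exists_norm_eq_iInf_of_complete_convex hne hcl.isComplete hc x
  have h := (norm_eq_iInf_iff_real_inner_le_zero hc hw).1 hmin
  rw [proj_eq_of_inner hw h]
  exact ⟨hw, h⟩

/-- if `y^j / j → ȳ`, then `(y^j - π_D[y^j])/j → π_{(rec D)°}[ȳ]`. -/
theorem stmt10 {n : ℕ} (D : Set (EuclideanSpace ℝ (Fin n)))
    (hDne : D.Nonempty) (hDcl : IsClosed D) (hDconv : Convex ℝ D)
    (y : ℕ → EuclideanSpace ℝ (Fin n)) (ybar : EuclideanSpace ℝ (Fin n))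
    (hy : Tendsto (fun j : ℕ => (j : ℝ)⁻¹ • y j) atTop (𝓝 ybar)) :
    Tendsto (fun j : ℕ => (j : ℝ)⁻¹ • (y j - proj D (y j))) atTop
      (𝓝 (proj (polarCone (recCone D)) ybar)) := by
  have hp := fun j => proj_spec_inner hDne hDcl hDconv (y j)
  obtain ⟨z0, hz0⟩ := hDne
  set p : ℕ → EuclideanSpace ℝ (Fin n) := fun j => proj D (y j) with hpdef
  set u : ℕ → EuclideanSpace ℝ (Fin n) := fun j => (j : ℝ)⁻¹ • (y j - p j) with hu
  change Tendsto u atTop _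
  have hinv : Tendsto (fun j : ℕ => (j : ℝ)⁻¹) atTop (𝓝 0) := tendsto_inv_atTop_nhds_zero_nat
  have hinvz : ∀ z : EuclideanSpace ℝ (Fin n),
      Tendsto (fun j : ℕ => (j : ℝ)⁻¹ • z) atTop (𝓝 0) := fun z => by
    simpa using hinv.smul_const z
  have hnn : ∀ j : ℕ, (0 : ℝ) ≤ (j : ℝ)⁻¹ := fun j => by positivity
  -- boundedness
  obtain ⟨C, hC⟩ := (Metric.isBounded_range_of_tendsto _ (hy.sub (hinvz z0))).exists_norm_le
  have hub : ∀ j, ‖u j‖ ≤ C := by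
    intro j
    refine le_trans ?_ (hC _ ⟨j, rfl⟩)
    simp only [hu, ← smul_sub, norm_smul]
    refine mul_le_mul_of_nonneg_left ?_ (norm_nonneg _)
    refine (sq_le_sq₀ (norm_nonneg _) (norm_nonneg _)).1 ?_
    have e : y j - z0 = (y j - p j) - (z0 - p j) := by abel
    rw [e, norm_sub_sq_real (y j - p j) (z0 - p j)]
    linarith [(hp j).2 z0 hz0, sq_nonneg ‖z0 - p j‖]
  refine tendsto_of_subseq_tendsto fun ns hns => ?_
  obtain ⟨a, -, φ, hφ, hlim⟩ := (isCompact_closedBall (0 : EuclideanSpace ℝ (Fin n)) C).tendsto_subseq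
    (x := u ∘ ns) (fun k => by simpa using hub (ns k))
  refine ⟨φ, ?_⟩
  have hm : Tendsto (fun k => ns (φ k)) atTop atTop := hns.comp hφ.tendsto_atTop
  have hq : Tendsto (fun k => ((ns (φ k) : ℕ) : ℝ)⁻¹ • p (ns (φ k))) atTop (𝓝 (ybar - a)) := by
    refine ((hy.comp hm).sub hlim).congr fun k => ?_
    simp [hu, smul_sub]
  have hqrec : ybar - a ∈ recCone D := by
    intro z hz
    have ht : Tendsto (fun k => ((ns (φ k) : ℕ) : ℝ)⁻¹ • p (ns (φ k)) +
        (1 - ((ns (φ k) : ℕ) : ℝ)⁻¹) • z) atTop (𝓝 (ybar - a + z)) := by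
      have := hq.add (((hinv.comp hm).const_sub 1).smul_const z)
      simpa using this
    refine hDcl.mem_of_tendsto ht (Eventually.of_forall fun k => ?_)
    refine hDconv (hp _).1 hz (hnn _) ?_ (by ring)
    exact sub_nonneg.2 (Nat.cast_inv_le_one _)
  have hapol : a ∈ polarCone (recCone D) := by
    intro d hd
    refine le_of_tendsto (hlim.inner tendsto_const_nhds) (Eventually.of_forall fun k => ?_)
    have := (hp (ns (φ k))).2 _ (hd _ (hp (ns (φ k))).1)
    rw [add_sub_cancel_right] at this
    simp only [Function.comp, hu, real_inner_smul_left]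
    exact mul_nonpos_of_nonneg_of_nonpos (hnn _) this
  have hge : 0 ≤ ⟪a, ybar - a⟫ := by
    have ht := hlim.inner (𝕜 := ℝ) (((hinvz z0).comp hm).sub hq)
    have : ⟪a, 0 - (ybar - a)⟫ ≤ 0 := by
      refine le_of_tendsto ht (Eventually.of_forall fun k => ?_)
      simp only [Function.comp, hu, ← smul_sub, real_inner_smul_left, real_inner_smul_right]
      exact mul_nonpos_of_nonneg_of_nonpos (hnn _)
        (mul_nonpos_of_nonneg_of_nonpos (hnn _) ((hp _).2 z0 hz0))
    rw [zero_sub, inner_neg_right] at this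
    linarith
  rw [proj_eq_of_inner hapol]
  · exact hlim
  · intro v hv
    have h1 := hv _ hqrec
    rw [real_inner_comm, inner_sub_left]
    linarith
end

section
/- Let P ∈ ℝ^{n×n} be symmetric positive semidefinite, q ∈ ℝⁿ, H ∈ ℝ^{m×n}, g ∈ ℝᵐ, D ⊆ ℝⁿ nonempty closed convex, K ⊆ ℝᵐ a nonempty closed convex cone with polar cone K°, and α > 0. Let {w^j, z^j, v^j} be generated by the PIPG iteration: w^{j+1} = π_{K°}[v^j + α(H z^j − g)], z^{j+1} = π_D[z^j − α(P z^j + q + Hᵀ w^{j+1})], v^{j+1} = w^{j+1} + α H(z^{j+1} − z^j). Then for all j ≥ 3: (1/α)(z^{j−1} − z^j) − P z^{j−1} − q − Hᵀ w^j ∈ N_D(z^j) and (1/α)(w^{j−1} − w^j) + H(2z^{j−1} − z^{j−2}) − g ∈ N_{K°}(w^j). -/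
open scoped RealInnerProductSpace
open Filter Topology Metric ContinuousLinearMap

theorem proj_variational {E : Type*} [NormedAddCommGroup E] [InnerProductSpace ℝ E]
    [CompleteSpace E] {S : Set E} (hne : S.Nonempty) (hcl : IsClosed S) (hc : Convex ℝ S)
    (x : E) : ∀ y ∈ S, ⟪x - proj S x, y - proj S x⟫ ≤ 0 := by
  have hbdd : BddBelow (Set.range fun y : S => ‖x - y‖) :=
    ⟨0, by rintro _ ⟨y, rfl⟩; exact norm_nonneg _⟩
  have h : ∃ y, y ∈ S ∧ ∀ z ∈ S, ‖x - y‖ ≤ ‖x - z‖ := by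
    obtain ⟨y, hy, he⟩ := exists_norm_eq_iInf_of_complete_convex hne hcl.isComplete hc x
    refine ⟨y, hy, fun z hz => ?_⟩
    rw [he]
    exact ciInf_le hbdd (⟨z, hz⟩ : S)
  have hp : proj S x = h.choose := by
    unfold _root_.proj
    rw [dif_pos h]
  have hs := h.choose_spec
  rw [← hp] at hs
  refine (norm_eq_iInf_iff_real_inner_le_zero hc hs.1).1 ?_
  have : Nonempty S := hne.to_subtype
  exact le_antisymm (le_ciInf fun y => hs.2 y y.2) (ciInf_le hbdd (⟨_, hs.1⟩ : S))

theorem normalCone_of_proj {E : Type*} [NormedAddCommGroup E] [InnerProductSpace ℝ E]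
    [CompleteSpace E] {S : Set E} (hne : S.Nonempty) (hcl : IsClosed S) (hc : Convex ℝ S)
    {α : ℝ} (hα : 0 < α) {x p u : E} (hp : p = proj S x) (hu : u = (1 / α) • (x - p)) :
    u ∈ normalCone S p := by
  intro y hy
  subst hp hu
  rw [real_inner_smul_left]
  exact mul_nonpos_of_nonneg_of_nonpos (by positivity) (proj_variational hne hcl hc x y hy)

theorem polarCone_props {E : Type*} [NormedAddCommGroup E] [InnerProductSpace ℝ E]
    (K : Set E) : (polarCone K).Nonempty ∧ IsClosed (polarCone K) ∧ Convex ℝ (polarCone K) := by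
  refine ⟨⟨0, fun y _ => by simp⟩, ?_, ?_⟩
  · have : polarCone K = ⋂ y ∈ K, {w : E | ⟪w, y⟫ ≤ 0} := by
      ext w; simp [polarCone]
    rw [this]
    exact isClosed_biInter fun y _ => isClosed_le (by fun_prop) continuous_const
  · intro a ha b hb s t hs ht _ y hy
    rw [inner_add_left, real_inner_smul_left, real_inner_smul_left]
    have h1 := mul_nonpos_of_nonneg_of_nonpos hs (ha y hy)
    have h2 := mul_nonpos_of_nonneg_of_nonpos ht (hb y hy)
    linarith

/-- normal-cone inclusions satisfied by the PIPG iterates. -/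
theorem stmt14 {n m : ℕ} (α : ℝ) (hα0 : 0 < α)
    (P : EuclideanSpace ℝ (Fin n) →L[ℝ] EuclideanSpace ℝ (Fin n))
    (hPsa : IsSelfAdjoint P) (hPpsd : ∀ x, 0 ≤ ⟪P x, x⟫)
    (q : EuclideanSpace ℝ (Fin n))
    (H : EuclideanSpace ℝ (Fin n) →L[ℝ] EuclideanSpace ℝ (Fin m))
    (g : EuclideanSpace ℝ (Fin m))
    (D : Set (EuclideanSpace ℝ (Fin n)))
    (hDne : D.Nonempty) (hDcl : IsClosed D) (hDconv : Convex ℝ D)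
    (K : Set (EuclideanSpace ℝ (Fin m)))
    (hKne : K.Nonempty) (hKcl : IsClosed K) (hKconv : Convex ℝ K)
    (hKcone : ∀ w ∈ K, ∀ a : ℝ, 0 ≤ a → a • w ∈ K)
    (w v : ℕ → EuclideanSpace ℝ (Fin m))
    (z : ℕ → EuclideanSpace ℝ (Fin n))
    (hw : ∀ j : ℕ, w (j + 1) = proj (polarCone K) (v j + α • (H (z j) - g)))
    (hz : ∀ j : ℕ, z (j + 1) =
      proj D (z j - α • (P (z j) + q + (ContinuousLinearMap.adjoint H) (w (j + 1)))))
    (hv : ∀ j : ℕ, v (j + 1) = w (j + 1) + α • H (z (j + 1) - z j))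
    :
    ∀ j : ℕ, 3 ≤ j →
      ((1/α) • (z (j - 1) - z j) - P (z (j - 1)) - q
          - (ContinuousLinearMap.adjoint H) (w j)) ∈ normalCone D (z j) ∧
      ((1/α) • (w (j - 1) - w j) + H ((2 : ℝ) • z (j - 1) - z (j - 2)) - g)
        ∈ normalCone (polarCone K) (w j) := by
  intro j hj
  obtain ⟨k, rfl⟩ : ∃ k, j = k + 3 := ⟨j - 3, by omega⟩
  have e1 : k + 3 - 1 = k + 2 := by omega
  have e2 : k + 3 - 2 = k + 1 := by omega
  rw [e1, e2]
  have hα : α ≠ 0 := hα0.ne'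
  obtain ⟨h1, h2, h3⟩ := polarCone_props K
  constructor
  · refine normalCone_of_proj hDne hDcl hDconv hα0 (hz (k + 2)) ?_
    match_scalars <;> field_simp
  · refine normalCone_of_proj h1 h2 h3 hα0 (hw (k + 2)) ?_
    rw [hv (k + 1)]
    simp only [map_sub, map_smul]
    match_scalars <;> field_simp <;> norm_num
end
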